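/- arXiv:1711.09132 — 2 statements merged into one kernel-verified Lean document; each statement's English description precedes it below -/
import Mathlib

section
/- In the two-mode noisy interferometry setting, any symmetric L_y with V L_y V + Ω L_y Ω = ∂_y V (note ∂_y V = 𝟙₄ and ∂_y d = 0) satisfies ℱ_{yy} := (1/2)·tr( (∂_y V) · L_y ) = 2·( x² cosh(4r) + 2 x y cosh(2r) + y² + 1 ) / ( 2 x y·[ 2 cosh(2r)·(x² + y²) + x y cosh(4r) ] + x⁴ + 4 x² y² + y⁴ − 1 ). -/
open Matrix

noncomputable section

/-- The standard symplectic form on two modes (4×4). -/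
def Omega4 : Matrix (Fin 4) (Fin 4) ℝ :=
  !![0, 1, 0, 0; -1, 0, 0, 0; 0, 0, 0, 1; 0, 0, -1, 0]

/-- Covariance matrix of the two-mode squeezed input with squeezing parameter `r`. -/
def V0 (r : ℝ) : Matrix (Fin 4) (Fin 4) ℝ :=
  !![Real.cosh (2*r), 0, Real.sinh (2*r), 0;
     0, Real.cosh (2*r), 0, -Real.sinh (2*r);
     Real.sinh (2*r), 0, Real.cosh (2*r), 0;
     0, -Real.sinh (2*r), 0, Real.cosh (2*r)]

/-- Input displacement `√2·(0, a, 0, a)ᵀ` of the optimal probe. -/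
def d0 (a : ℝ) : Fin 4 → ℝ := ![0, Real.sqrt 2 * a, 0, Real.sqrt 2 * a]

/-- Phase rotations by `±φ/2` on the two modes. -/
def Sphase (φ : ℝ) : Matrix (Fin 4) (Fin 4) ℝ :=
  !![Real.cos (φ/2), Real.sin (φ/2), 0, 0;
     -Real.sin (φ/2), Real.cos (φ/2), 0, 0;
     0, 0, Real.cos (φ/2), -Real.sin (φ/2);
     0, 0, Real.sin (φ/2), Real.cos (φ/2)]

/-- Evolved covariance matrix `x·S_φ V₀ S_φᵀ + y·𝟙₄`. -/
def Vm (r φ x y : ℝ) : Matrix (Fin 4) (Fin 4) ℝ :=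
  x • (Sphase φ * V0 r * (Sphase φ)ᵀ) + y • (1 : Matrix (Fin 4) (Fin 4) ℝ)

/-- Evolved displacement `√x·S_φ d₀`. -/
def dm (a φ x : ℝ) : Fin 4 → ℝ := Real.sqrt x • (Sphase φ).mulVec (d0 a)

/-- Entrywise partial derivative of `Vm` with respect to `φ`. -/
def dVdphi (r φ x y : ℝ) : Matrix (Fin 4) (Fin 4) ℝ :=
  Matrix.of fun i j => deriv (fun t => Vm r t x y i j) φ

/-- Entrywise partial derivative of `Vm` with respect to `x`. -/
def dVdx (r φ x y : ℝ) : Matrix (Fin 4) (Fin 4) ℝ :=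
  Matrix.of fun i j => deriv (fun t => Vm r φ t y i j) x

/-- Entrywise partial derivative of `Vm` with respect to `y`. -/
def dVdy (r φ x y : ℝ) : Matrix (Fin 4) (Fin 4) ℝ :=
  Matrix.of fun i j => deriv (fun t => Vm r φ x t i j) y

/-- Entrywise partial derivative of `dm` with respect to `φ`. -/
def ddphi (a φ x : ℝ) : Fin 4 → ℝ := fun i => deriv (fun t => dm a t x i) φ

/-- Entrywise partial derivative of `dm` with respect to `x`. -/
def ddx (a φ x : ℝ) : Fin 4 → ℝ := fun i => deriv (fun t => dm a φ t i) x

/-- Entrywise partial derivative of `dm` with respect to `y` (the displacement does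
not depend on `y`). -/
def ddy (a φ x y : ℝ) : Fin 4 → ℝ := fun i => deriv (fun _t : ℝ => dm a φ x i) y

/-!
The superoperator `M ↦ V M V + Ω M Ω` is self-adjoint for the trace pairing, so the trace of any
solution `L` of `V L V + Ω L Ω = 1` can be read off from one matrix `A` that the superoperator maps
to a scalar. Opposite phase rotations leave the two-mode squeezed covariance matrix unchanged, hence
`V = c • 1 + s • Z` with `Z * Z = 1` and `Ω * Z * Ω = Z`; then `A` is found in the span of `1`
and `Z`. A solution `L` can exist only if the scalar is nonzero, because `A` has positive trace.
-/

section SymplecticLyapunov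

/-- The superoperator `M ↦ V M V + Ω M Ω`. For a Gaussian state with covariance matrix `V`, it sends
the quadratic part of the symmetric logarithmic derivative to the derivative of `V`. -/
def symplecticLyapunov {A : Type*} [Mul A] [Add A] (Ω V M : A) : A :=
  V * M * V + Ω * M * Ω

theorem symplecticLyapunov_smul_one_add_smul {R A : Type*} [CommRing R] [Ring A] [Algebra R A]
    {Ω Z : A} (hΩ : Ω * Ω = -1) (hΩZ : Ω * Z * Ω = Z) (hZ : Z * Z = 1) (c s : R) :
    symplecticLyapunov Ω (c • 1 + s • Z) ((c ^ 2 + s ^ 2 + 1) • 1 - (2 * c * s) • Z) =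
      ((c ^ 2 - s ^ 2) ^ 2 - 1) • 1 := by
  simp only [symplecticLyapunov, mul_add, add_mul, mul_sub, sub_mul, smul_mul_assoc,
    mul_smul_comm, one_mul, mul_one, hΩ, hΩZ, hZ]
  module

variable {n R : Type*} [Fintype n]

theorem trace_mul_symplecticLyapunov [CommSemiring R] (Ω V A M : Matrix n n R) :
    (A * symplecticLyapunov Ω V M).trace = (symplecticLyapunov Ω V A * M).trace := by
  have trace_conj (B : Matrix n n R) : (A * (B * M * B)).trace = (B * A * B * M).trace := by
    rw [← mul_assoc, trace_mul_comm]
    simp only [mul_assoc]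
  simp only [symplecticLyapunov, mul_add, add_mul, trace_add, trace_conj]

variable [DecidableEq n]

theorem trace_eq_zero_of_mul_mul_eq_self [CommRing R] [NoZeroDivisors R] [CharZero R]
    {Ω Z : Matrix n n R} (hΩ : Ω * Ω = -1) (hΩZ : Ω * Z * Ω = Z) : Z.trace = 0 := by
  refine CharZero.eq_neg_self_iff.mp ?_
  calc Z.trace = (Ω * Z * Ω).trace := by rw [hΩZ]
    _ = (Ω * Ω * Z).trace := by rw [trace_mul_comm, mul_assoc]
    _ = -Z.trace := by rw [hΩ, neg_one_mul, trace_neg]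

theorem mul_trace_of_symplecticLyapunov_eq_one [CommRing R] [NoZeroDivisors R] [CharZero R]
    {Ω Z M : Matrix n n R} (hΩ : Ω * Ω = -1) (hΩZ : Ω * Z * Ω = Z) (hZ : Z * Z = 1) {c s : R}
    (hM : symplecticLyapunov Ω (c • 1 + s • Z) M = 1) :
    ((c ^ 2 - s ^ 2) ^ 2 - 1) * M.trace = Fintype.card n * (c ^ 2 + s ^ 2 + 1) := by
  let A : Matrix n n R := (c ^ 2 + s ^ 2 + 1) • 1 - (2 * c * s) • Z
  calc ((c ^ 2 - s ^ 2) ^ 2 - 1) * M.trace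
      = (symplecticLyapunov Ω (c • 1 + s • Z) A * M).trace := by
        rw [symplecticLyapunov_smul_one_add_smul hΩ hΩZ hZ, smul_one_mul, trace_smul, smul_eq_mul]
    _ = A.trace := by rw [← trace_mul_symplecticLyapunov, hM, mul_one]
    _ = Fintype.card n * (c ^ 2 + s ^ 2 + 1) := by
        rw [trace_sub, trace_smul, trace_smul, trace_one, trace_eq_zero_of_mul_mul_eq_self hΩ hΩZ,
          smul_zero, sub_zero, smul_eq_mul, mul_comm]

theorem trace_of_symplecticLyapunov_eq_one [Nonempty n] [Field R] [LinearOrder R]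
    [IsStrictOrderedRing R] {Ω Z M : Matrix n n R} (hΩ : Ω * Ω = -1) (hΩZ : Ω * Z * Ω = Z)
    (hZ : Z * Z = 1) {c s : R} (hM : symplecticLyapunov Ω (c • 1 + s • Z) M = 1) :
    M.trace = Fintype.card n * (c ^ 2 + s ^ 2 + 1) / ((c ^ 2 - s ^ 2) ^ 2 - 1) := by
  have trace_identity := mul_trace_of_symplecticLyapunov_eq_one hΩ hΩZ hZ hM
  have rhs_pos : 0 < (Fintype.card n : R) * (c ^ 2 + s ^ 2 + 1) :=
    mul_pos (Nat.cast_pos.mpr Fintype.card_pos) (by positivity)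
  have denom_ne_zero : (c ^ 2 - s ^ 2) ^ 2 - 1 ≠ 0 :=
    left_ne_zero_of_mul (trace_identity.trans_ne rhs_pos.ne')
  exact eq_div_of_mul_eq denom_ne_zero (by rw [mul_comm, trace_identity])

end SymplecticLyapunov

/-- The off-diagonal part of the two-mode squeezed covariance matrix: `σ_z` in both off-diagonal
2×2 blocks, so that `V0 r` is a combination of `1` and this involution. -/
def twoModeCorrelation : Matrix (Fin 4) (Fin 4) ℝ :=
  !![0, 0, 1, 0; 0, 0, 0, -1; 1, 0, 0, 0; 0, -1, 0, 0]

theorem twoModeCorrelation_mul_self : twoModeCorrelation * twoModeCorrelation = 1 := by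
  ext i j
  fin_cases i <;> fin_cases j <;> simp [twoModeCorrelation, mul_apply, Fin.sum_univ_four]

theorem Omega4_mul_self : Omega4 * Omega4 = -1 := by
  ext i j
  fin_cases i <;> fin_cases j <;> simp [Omega4, mul_apply, Fin.sum_univ_four]

theorem Omega4_mul_twoModeCorrelation_mul_Omega4 :
    Omega4 * twoModeCorrelation * Omega4 = twoModeCorrelation := by
  ext i j
  fin_cases i <;> fin_cases j <;>
    simp [Omega4, twoModeCorrelation, mul_apply, Fin.sum_univ_four]

theorem V0_eq_smul_one_add_smul (r : ℝ) :
    V0 r = Real.cosh (2 * r) • 1 + Real.sinh (2 * r) • twoModeCorrelation := by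
  ext i j
  fin_cases i <;> fin_cases j <;> simp [V0, twoModeCorrelation]

theorem Sphase_mul_transpose (φ : ℝ) : Sphase φ * (Sphase φ)ᵀ = 1 := by
  have := Real.sin_sq_add_cos_sq (φ / 2)
  ext i j
  fin_cases i <;> fin_cases j <;> simp [Sphase, mul_apply, Fin.sum_univ_four] <;> linarith

theorem commute_Sphase_twoModeCorrelation (φ : ℝ) : Commute (Sphase φ) twoModeCorrelation := by
  ext i j
  fin_cases i <;> fin_cases j <;> simp [Sphase, twoModeCorrelation, mul_apply, Fin.sum_univ_four]

theorem Sphase_mul_V0_mul_transpose (r φ : ℝ) : Sphase φ * V0 r * (Sphase φ)ᵀ = V0 r := by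
  have commute_V0 : Commute (Sphase φ) (V0 r) := by
    rw [V0_eq_smul_one_add_smul]
    exact ((Commute.one_right _).smul_right _).add_right
      ((commute_Sphase_twoModeCorrelation φ).smul_right _)
  rw [commute_V0.eq, mul_assoc, Sphase_mul_transpose, mul_one]

theorem Vm_eq_smul_one_add_smul (r φ x y : ℝ) :
    Vm r φ x y =
      (x * Real.cosh (2 * r) + y) • 1 + (x * Real.sinh (2 * r)) • twoModeCorrelation := by
  rw [Vm, Sphase_mul_V0_mul_transpose, V0_eq_smul_one_add_smul]
  module

theorem dVdy_eq_one (r φ x y : ℝ) : dVdy r φ x y = 1 := by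
  ext i j
  simp [dVdy, Vm]

theorem qfi_y_y_general (r φ x y : ℝ) (L : Matrix (Fin 4) (Fin 4) ℝ)
    (hL : Vm r φ x y * L * Vm r φ x y + Omega4 * L * Omega4 = dVdy r φ x y) :
    (1 / 2) * (dVdy r φ x y * L).trace =
      2 * (x ^ 2 * Real.cosh (4 * r) + 2 * x * y * Real.cosh (2 * r) + y ^ 2 + 1)
        / (2 * x * y * (2 * Real.cosh (2 * r) * (x ^ 2 + y ^ 2) + x * y * Real.cosh (4 * r))
            + x ^ 4 + 4 * x ^ 2 * y ^ 2 + y ^ 4 - 1) := by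
  rw [dVdy_eq_one, Vm_eq_smul_one_add_smul] at hL
  have trace_L := trace_of_symplecticLyapunov_eq_one Omega4_mul_self
    Omega4_mul_twoModeCorrelation_mul_Omega4 twoModeCorrelation_mul_self hL
  have cosh_four_mul : Real.cosh (4 * r) = Real.cosh (2 * r) ^ 2 + Real.sinh (2 * r) ^ 2 := by
    rw [← Real.cosh_two_mul, ← mul_assoc]
    norm_num
  have sq_sub_sq_eq : (x * Real.cosh (2 * r) + y) ^ 2 - (x * Real.sinh (2 * r)) ^ 2 =
      x ^ 2 + 2 * x * y * Real.cosh (2 * r) + y ^ 2 := by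
    linear_combination x ^ 2 * Real.cosh_sq (2 * r)
  rw [dVdy_eq_one, one_mul, trace_L, sq_sub_sq_eq, Fintype.card_fin, cosh_four_mul, ← mul_div_assoc]
  congr 1
  · push_cast
    ring
  · linear_combination 2 * x ^ 2 * y ^ 2 * Real.cosh_sq (2 * r)

theorem qfi_y_y (r a φ x y : ℝ) (hr : 0 ≤ r) (hx : 0 < x) (hy : |1 - x| < y)
    (L : Matrix (Fin 4) (Fin 4) ℝ) (hLsymm : L.IsSymm)
    (hL : Vm r φ x y * L * Vm r φ x y + Omega4 * L * Omega4 = dVdy r φ x y) :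
    (1/2) * (dVdy r φ x y * L).trace =
    2 * (x^2 * Real.cosh (4*r) + 2 * x * y * Real.cosh (2*r) + y^2 + 1)
      / (2 * x * y * (2 * Real.cosh (2*r) * (x^2 + y^2) + x * y * Real.cosh (4*r))
          + x^4 + 4 * x^2 * y^2 + y^4 - 1) :=
  qfi_y_y_general r φ x y L hL
end
end

section
/- In the two-mode noisy interferometry setting, the phase parameter is statistically independent of both noise parameters: for any symmetric matrices L_φ, L_x, L_y with V L_ζ V + Ω L_ζ Ω = ∂_ζ V (ζ ∈ {φ, x, y}), one has (1/2)·tr( (∂_x V) · L_φ ) + 2·(∂_φ d)ᵀ V⁻¹ (∂_x d) = 0 and (1/2)·tr( (∂_y V) · L_φ ) + 2·(∂_φ d)ᵀ V⁻¹ (∂_y d) = 0, i.e., ℱ_{φx} = ℱ_{φy} = 0. -/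
open Matrix

noncomputable section

/-!
The rotation `S_φ` is orthogonal and commutes with `V₀`, so `V = x V₀ + y` does not depend on `φ`.
The map `L ↦ V L V + Ω L Ω` is self-adjoint for the trace pairing, hence
`tr(∂_ζV · L_φ) = tr(L_ζ · ∂_φV) = 0`. For the displacement, `d₀` is an eigenvector of `V₀`, so
`d`, and with it `∂_x d ∥ d`, is an eigenvector of `V⁻¹`, while `∂_φ d ⊥ d` because rotations
preserve the length of `d`.
-/

section

variable {n : Type*} [Fintype n]

lemma trace_sandwich_mul {R : Type*} [NonUnitalCommSemiring R] (M A B : Matrix n n R) :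
    (M * A * M * B).trace = (A * (M * B * M)).trace := by
  rw [Matrix.mul_assoc, trace_mul_cycle, trace_mul_comm]

lemma trace_sandwich_add_sandwich_mul {R : Type*} [NonUnitalCommSemiring R]
    (V Ω K L : Matrix n n R) :
    ((V * K * V + Ω * K * Ω) * L).trace = (K * (V * L * V + Ω * L * Ω)).trace := by
  simp only [Matrix.add_mul, Matrix.mul_add, trace_add, trace_sandwich_mul]

lemma inv_mulVec_of_mulVec_eq_smul {K : Type*} [Field K] [DecidableEq n] {A : Matrix n n K}
    (hA : IsUnit A.det) {u : n → K} {μ : K} (hu : A *ᵥ u = μ • u) : A⁻¹ *ᵥ u = μ⁻¹ • u := by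
  have hμ : μ • A⁻¹ *ᵥ u = u := by
    rw [← mulVec_smul, ← hu, mulVec_mulVec, nonsing_inv_mul A hA, one_mulVec]
  obtain rfl | hμ₀ := eq_or_ne μ 0
  · have hu₀ : u = 0 := by rw [← hμ, zero_smul]
    simp only [hu₀, mulVec_zero, smul_zero]
  · exact (eq_inv_smul_iff₀ hμ₀).2 hμ

lemma mulVec_dotProduct_mulVec_of_mem_orthogonalGroup {R : Type*} [CommRing R] [DecidableEq n]
    {Q : Matrix n n R} (hQ : Q ∈ orthogonalGroup n R) (u v : n → R) :
    Q *ᵥ u ⬝ᵥ Q *ᵥ v = u ⬝ᵥ v := by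
  rw [dotProduct_mulVec, ← mulVec_transpose, mulVec_mulVec, (mem_orthogonalGroup_iff' n R).1 hQ,
    one_mulVec]

lemma dotProduct_eq_zero_of_hasDerivAt_of_dotProduct_self_const {𝕜 : Type*}
    [NontriviallyNormedField 𝕜] [NeZero (2 : 𝕜)] {f : 𝕜 → n → 𝕜} {f' : n → 𝕜} {t c : 𝕜}
    (hf : HasDerivAt f f' t) (hc : ∀ s, f s ⬝ᵥ f s = c) : f' ⬝ᵥ f t = 0 := by
  have hderiv : HasDerivAt (fun s => f s ⬝ᵥ f s) (f' ⬝ᵥ f t + f t ⬝ᵥ f') t := by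
    simp only [dotProduct, ← Finset.sum_add_distrib]
    exact HasDerivAt.fun_sum fun i _ => (hasDerivAt_pi.1 hf i).mul (hasDerivAt_pi.1 hf i)
  simp only [hc, dotProduct_comm (f t), ← two_mul] at hderiv
  exact (mul_eq_zero_iff_left two_ne_zero).1 (hderiv.unique (hasDerivAt_const t c))

end

lemma Sphase_mem_orthogonalGroup (φ : ℝ) : Sphase φ ∈ orthogonalGroup (Fin 4) ℝ := by
  rw [mem_orthogonalGroup_iff]
  ext i j
  fin_cases i <;> fin_cases j <;>
    simp [Sphase, mul_apply, Fin.sum_univ_four, ← sq, mul_comm]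

lemma Sphase_commute_V0 (r φ : ℝ) : Commute (Sphase φ) (V0 r) := by
  ext i j
  fin_cases i <;> fin_cases j <;>
    simp [Sphase, V0, mul_apply, Fin.sum_univ_four, mul_comm]

lemma V0_mulVec_d0 (r a : ℝ) : V0 r *ᵥ d0 a = Real.exp (-(2 * r)) • d0 a := by
  rw [← Real.cosh_sub_sinh]
  ext i
  fin_cases i <;> simp [V0, d0, -Real.cosh_sub_sinh] <;> ring

lemma Vm_eq (r φ x y : ℝ) : Vm r φ x y = x • V0 r + y • 1 := by
  rw [Vm, (Sphase_commute_V0 r φ).eq, Matrix.mul_assoc,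
    (mem_orthogonalGroup_iff _ _).1 (Sphase_mem_orthogonalGroup φ), Matrix.mul_one]

lemma det_Vm (r φ x y : ℝ) :
    (Vm r φ x y).det = (x ^ 2 + 2 * x * y * Real.cosh (2 * r) + y ^ 2) ^ 2 := by
  have hdet : (Vm r φ x y).det =
      ((x * Real.cosh (2 * r) + y) ^ 2 - (x * Real.sinh (2 * r)) ^ 2) ^ 2 := by
    rw [Vm_eq]
    simp [V0, det_succ_row_zero, Fin.sum_univ_succ, Fin.succAbove, one_apply]
    ring
  rw [hdet, mul_pow, Real.sinh_sq]
  ring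

lemma isUnit_det_Vm (r φ : ℝ) {x y : ℝ} (hx : 0 < x) (hy : 0 < y) :
    IsUnit (Vm r φ x y).det := by
  rw [det_Vm, isUnit_iff_ne_zero]
  positivity

lemma Vm_mulVec_dm (r a φ x y : ℝ) :
    Vm r φ x y *ᵥ dm a φ x = (x * Real.exp (-(2 * r)) + y) • dm a φ x := by
  have hV0 : V0 r *ᵥ dm a φ x = Real.exp (-(2 * r)) • dm a φ x := by
    rw [dm, mulVec_smul, mulVec_mulVec, ← (Sphase_commute_V0 r φ).eq, ← mulVec_mulVec,
      V0_mulVec_d0, mulVec_smul, smul_comm]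
  rw [Vm_eq, add_mulVec, smul_mulVec, smul_mulVec, one_mulVec, hV0, smul_smul, add_smul]

lemma dVdphi_eq_zero (r φ x y : ℝ) : dVdphi r φ x y = 0 := by
  ext i j
  simp only [dVdphi, Vm_eq, of_apply, deriv_const, Matrix.zero_apply]

lemma differentiable_Sphase_apply (i j : Fin 4) : Differentiable ℝ fun φ => Sphase φ i j := by
  have hcos : Differentiable ℝ fun φ : ℝ => Real.cos (φ / 2) := by fun_prop
  have hsin : Differentiable ℝ fun φ : ℝ => Real.sin (φ / 2) := by fun_prop
  fin_cases i <;> fin_cases j <;> simp [Sphase, hcos, hsin]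

lemma hasDerivAt_dm_phi (a φ x : ℝ) : HasDerivAt (fun t => dm a t x) (ddphi a φ x) φ := by
  have hS := differentiable_Sphase_apply
  refine hasDerivAt_pi.2 fun i => DifferentiableAt.hasDerivAt ?_
  simp only [dm, mulVec, dotProduct, Pi.smul_apply]
  fun_prop

lemma dm_dotProduct_self (a φ x : ℝ) : dm a φ x ⬝ᵥ dm a φ x = √x * (√x * (d0 a ⬝ᵥ d0 a)) := by
  rw [dm, smul_dotProduct, dotProduct_smul, smul_eq_mul, smul_eq_mul,
    mulVec_dotProduct_mulVec_of_mem_orthogonalGroup (Sphase_mem_orthogonalGroup φ)]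

lemma ddphi_dotProduct_dm (a φ x : ℝ) : ddphi a φ x ⬝ᵥ dm a φ x = 0 :=
  dotProduct_eq_zero_of_hasDerivAt_of_dotProduct_self_const (f := fun t => dm a t x)
    (hasDerivAt_dm_phi a φ x) fun t => dm_dotProduct_self a t x

lemma ddx_eq_smul_dm (a φ : ℝ) {x : ℝ} (hx : 0 < x) : ddx a φ x = (2 * x)⁻¹ • dm a φ x := by
  ext i
  have hderiv : HasDerivAt (fun t => dm a φ t i) (1 / (2 * √x) * (Sphase φ *ᵥ d0 a) i) x :=
    (Real.hasDerivAt_sqrt hx.ne').mul_const _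
  have hcoeff : 1 / (2 * √x) = (2 * x)⁻¹ * √x := by
    have hsqrt : √x ≠ 0 := (Real.sqrt_pos.2 hx).ne'
    field_simp
    rw [Real.sq_sqrt hx.le]
  rw [ddx, hderiv.deriv, hcoeff, dm, Pi.smul_apply, Pi.smul_apply, smul_eq_mul, smul_eq_mul,
    mul_assoc]

lemma ddy_eq_zero (a φ x y : ℝ) : ddy a φ x y = 0 :=
  funext fun i => deriv_const y (dm a φ x i)

lemma ddphi_dotProduct_inv_Vm_mulVec_ddx (r a φ y : ℝ) {x : ℝ} (hx : 0 < x)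
    (hV : IsUnit (Vm r φ x y).det) : ddphi a φ x ⬝ᵥ (Vm r φ x y)⁻¹ *ᵥ ddx a φ x = 0 := by
  rw [ddx_eq_smul_dm a φ hx, mulVec_smul,
    inv_mulVec_of_mulVec_eq_smul hV (Vm_mulVec_dm r a φ x y), dotProduct_smul, dotProduct_smul,
    ddphi_dotProduct_dm, smul_zero, smul_zero]

theorem qfi_phase_noise_independence_general (r a φ x y : ℝ) (hx : 0 < x)
    (hV : IsUnit (Vm r φ x y).det) (Lφ Lx Ly : Matrix (Fin 4) (Fin 4) ℝ)
    (hLφ : Vm r φ x y * Lφ * Vm r φ x y + Omega4 * Lφ * Omega4 = dVdphi r φ x y)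
    (hLx : Vm r φ x y * Lx * Vm r φ x y + Omega4 * Lx * Omega4 = dVdx r φ x y)
    (hLy : Vm r φ x y * Ly * Vm r φ x y + Omega4 * Ly * Omega4 = dVdy r φ x y) :
    (1/2) * (dVdx r φ x y * Lφ).trace
      + 2 * (ddphi a φ x ⬝ᵥ (Vm r φ x y)⁻¹.mulVec (ddx a φ x)) = 0 ∧
    (1/2) * (dVdy r φ x y * Lφ).trace
      + 2 * (ddphi a φ x ⬝ᵥ (Vm r φ x y)⁻¹.mulVec (ddy a φ x y)) = 0 := by
  rw [dVdphi_eq_zero] at hLφ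
  have htrace_x : (dVdx r φ x y * Lφ).trace = 0 := by
    rw [← hLx, trace_sandwich_add_sandwich_mul, hLφ, Matrix.mul_zero, trace_zero]
  have htrace_y : (dVdy r φ x y * Lφ).trace = 0 := by
    rw [← hLy, trace_sandwich_add_sandwich_mul, hLφ, Matrix.mul_zero, trace_zero]
  constructor
  · rw [htrace_x, ddphi_dotProduct_inv_Vm_mulVec_ddx r a φ y hx hV, mul_zero, mul_zero, add_zero]
  · rw [htrace_y, ddy_eq_zero, mulVec_zero, dotProduct_zero, mul_zero, mul_zero, add_zero]

theorem qfi_phase_noise_independence (r a φ x y : ℝ)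
    (hr : 0 ≤ r) (hx : 0 < x) (hy : |1 - x| < y)
    (Lφ Lx Ly : Matrix (Fin 4) (Fin 4) ℝ)
    (hLφs : Lφ.IsSymm) (hLxs : Lx.IsSymm) (hLys : Ly.IsSymm)
    (hLφ : Vm r φ x y * Lφ * Vm r φ x y + Omega4 * Lφ * Omega4 = dVdphi r φ x y)
    (hLx : Vm r φ x y * Lx * Vm r φ x y + Omega4 * Lx * Omega4 = dVdx r φ x y)
    (hLy : Vm r φ x y * Ly * Vm r φ x y + Omega4 * Ly * Omega4 = dVdy r φ x y) :
    (1/2) * (dVdx r φ x y * Lφ).trace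
      + 2 * (ddphi a φ x ⬝ᵥ (Vm r φ x y)⁻¹.mulVec (ddx a φ x)) = 0 ∧
    (1/2) * (dVdy r φ x y * Lφ).trace
      + 2 * (ddphi a φ x ⬝ᵥ (Vm r φ x y)⁻¹.mulVec (ddy a φ x y)) = 0 := by
  exact qfi_phase_noise_independence_general r a φ x y hx
    (isUnit_det_Vm r φ hx ((abs_nonneg _).trans_lt hy)) Lφ Lx Ly hLφ hLx hLy
end
end
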